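/- Let (X,d) be a complete b-rectangular metric space with coefficient s ≥ 1, T : X → X a mapping, and φ : X → [0,∞) a lower semicontinuous function. Suppose there exists k ∈ (0,1) such that for all x, y ∈ X, s²d(Tx,Ty) + φ(Tx) + φ(Ty) ≤ k·max{d(x,y)+φ(x)+φ(y), d(x,Tx)+φ(x)+φ(Tx), d(y,Ty)+φ(y)+φ(Ty)}. Then T has a unique fixed point. -/

import Mathlib

/-!
Write `S x y = d x y + φ x + φ y` (`phiDist`). Since `s ^ 2 ≥ 1`, the hypothesis gives
`S (T x) (T y) ≤ k * max (S x y) (max (S x (T x)) (S y (T y)))`; taking `y = T x` shows that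
`S x (T x)` shrinks by the factor `k` along an orbit (`phiDist_step`), and then
`S (T^[n] x) (T^[n] y)` decays like `k ^ n` (`phiDist_iterate`).

If an orbit `x n = T^[n] x` repeats a value, the shrinking of `S (x n) (x (n + 1))` forces it to
vanish, which yields a fixed point. Otherwise the orbit is injective, and the rectangle inequality
is available for any four distinct indices. Applied to `0, N, N + p, p` with `s * k ^ N ≤ 1 / 2` it
bounds `d (x 0) (x p)` uniformly in `p` (`orbit_bounded`): the middle side is at most
`k ^ N * (d (x 0) (x p) + const)` and can be absorbed on the left. With the geometric decay the
orbit is therefore Cauchy. Its limit `z` has `φ z = 0` by lower semicontinuity, and the rectangle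
inequality through `x n, x (n + 1)` combined with the contraction at `(x n, z)` gives
`S z (T z) ≤ k * S z (T z)` in the limit, so `T z = z`.

Two fixed points `z, w` satisfy `S z w ≤ k * max (S z w) (max (S z z) (S w w))`, where the last two
terms vanish by the same inequality at `(z, z)` and `(w, w)`.
-/

open Filter Topology

/-- A b-rectangular metric space with coefficient `s`. -/
structure RectBMetric (X : Type*) (s : ℝ) where
  d : X → X → ℝ
  nonneg : ∀ x y, 0 ≤ d x y
  eq_iff : ∀ x y, d x y = 0 ↔ x = y
  symm : ∀ x y, d x y = d y x
  rect : ∀ x y u v : X, u ≠ v → u ≠ x → u ≠ y → v ≠ x → v ≠ y →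
    d x y ≤ s * (d x u + d u v + d v y)

namespace RectBMetric

variable {X : Type*} {s : ℝ}

/-- Convergence of a sequence in a b-rectangular metric space. -/
def TendstoSeq (B : RectBMetric X s) (x : ℕ → X) (l : X) : Prop :=
  Filter.Tendsto (fun n => B.d (x n) l) Filter.atTop (nhds 0)

/-- Cauchy sequences in a b-rectangular metric space. -/
def IsCauchySeq (B : RectBMetric X s) (x : ℕ → X) : Prop :=
  ∀ ε : ℝ, 0 < ε → ∃ N : ℕ, ∀ m ≥ N, ∀ n ≥ N, B.d (x m) (x n) < ε

/-- Completeness of a b-rectangular metric space. -/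
def Complete (B : RectBMetric X s) : Prop :=
  ∀ x : ℕ → X, B.IsCauchySeq x → ∃ l, B.TendstoSeq x l

/-- Lower semicontinuity of `φ : X → ℝ` with respect to a b-rectangular metric. -/
def LSC (B : RectBMetric X s) (φ : X → ℝ) : Prop :=
  ∀ (x : ℕ → X) (l : X), B.TendstoSeq x l →
    φ l ≤ Filter.liminf (fun n => φ (x n)) Filter.atTop

/-- The quantity `M(x,y,d,T,φ)`. -/
def Mfun (B : RectBMetric X s) (T : X → X) (φ : X → ℝ) (x y : X) : ℝ :=
  max (B.d x y + φ x + φ y)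
    (max (B.d x (T x) + φ x + φ (T x)) (B.d y (T y) + φ y + φ (T y)))

end RectBMetric

/-- An altering distance function on `[0,∞)`. -/
def AlteringDistance (ψ : ℝ → ℝ) : Prop :=
  ContinuousOn ψ (Set.Ici 0) ∧ MonotoneOn ψ (Set.Ici 0) ∧
    (∀ t ≥ (0:ℝ), 0 ≤ ψ t) ∧ (∀ t ≥ (0:ℝ), (ψ t = 0 ↔ t = 0))

/-- The class `Φᵤ`: continuous `ϕ : [0,∞) → [0,∞)` with `ϕ(t) > 0` for `t > 0`, `ϕ(0) ≥ 0`. -/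
def PhiU (ϕ : ℝ → ℝ) : Prop :=
  ContinuousOn ϕ (Set.Ici 0) ∧ (∀ t : ℝ, 0 < t → 0 < ϕ t) ∧ 0 ≤ ϕ 0

/-- C-class functions. -/
def CClass (F : ℝ → ℝ → ℝ) : Prop :=
  ContinuousOn (fun p : ℝ × ℝ => F p.1 p.2) (Set.Ici 0 ×ˢ Set.Ici 0) ∧
    (∀ a b : ℝ, 0 ≤ a → 0 ≤ b → F a b ≤ a) ∧
    (∀ a b : ℝ, 0 ≤ a → 0 ≤ b → F a b = a → a = 0 ∨ b = 0)


namespace RectBMetric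

variable {X : Type*} {s : ℝ}

/-- The distance perturbed by `φ`: `d x y + φ x + φ y`. -/
def phiDist (B : RectBMetric X s) (φ : X → ℝ) (x y : X) : ℝ := B.d x y + φ x + φ y

/-- The contraction hypothesis with the factor `s ^ 2` weakened to `1`. -/
def PhiContr (B : RectBMetric X s) (T : X → X) (φ : X → ℝ) (k : ℝ) : Prop :=
  ∀ x y, B.phiDist φ (T x) (T y) ≤
    k * max (B.phiDist φ x y) (max (B.phiDist φ x (T x)) (B.phiDist φ y (T y)))

theorem d_self (B : RectBMetric X s) (x : X) : B.d x x = 0 := (B.eq_iff x x).2 rfl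

theorem phiDist_nonneg (B : RectBMetric X s) {φ : X → ℝ} (hφ0 : ∀ x, 0 ≤ φ x) (x y : X) :
    0 ≤ B.phiDist φ x y := by
  have := B.nonneg x y
  have := hφ0 x
  have := hφ0 y
  unfold phiDist
  linarith

section Orbit

variable {B : RectBMetric X s} {T : X → X} {φ : X → ℝ} {k : ℝ}

theorem phiDist_step (hφ0 : ∀ x, 0 ≤ φ x) (hk1 : k < 1) (h : B.PhiContr T φ k) (x : X) :
    B.phiDist φ (T x) (T (T x)) ≤ k * B.phiDist φ x (T x) := by
  have h1 := h x (T x)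
  have h2 := B.phiDist_nonneg hφ0 (T x) (T (T x))
  have h3 := B.phiDist_nonneg hφ0 x (T x)
  rcases le_total (B.phiDist φ (T x) (T (T x))) (B.phiDist φ x (T x)) with hle | hle
  · rwa [max_eq_left hle, max_self] at h1
  · -- here the maximum is `S (T x) (T (T x))` itself, which must then be zero
    rw [max_eq_right hle, max_eq_right hle] at h1
    have h4 : B.phiDist φ (T x) (T (T x)) = 0 := by nlinarith
    have h5 : B.phiDist φ x (T x) = 0 := by linarith
    simp [h4, h5]

theorem phiDist_step_iterate (hφ0 : ∀ x, 0 ≤ φ x) (hk0 : 0 < k) (hk1 : k < 1)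
    (h : B.PhiContr T φ k) (x : X) (n : ℕ) :
    B.phiDist φ (T^[n] x) (T (T^[n] x)) ≤ k ^ n * B.phiDist φ x (T x) := by
  induction n with
  | zero => simp
  | succ n ih =>
    rw [Function.iterate_succ_apply', pow_succ', mul_assoc]
    exact (phiDist_step hφ0 hk1 h _).trans (by gcongr)

theorem phiDist_iterate (hφ0 : ∀ x, 0 ≤ φ x) (hk0 : 0 < k) (hk1 : k < 1)
    (h : B.PhiContr T φ k) (x y : X) (n : ℕ) :
    B.phiDist φ (T^[n] x) (T^[n] y) ≤
      k ^ n * max (B.phiDist φ x y) (max (B.phiDist φ x (T x)) (B.phiDist φ y (T y))) := by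
  induction n with
  | zero => simp
  | succ n ih =>
    rw [Function.iterate_succ_apply', Function.iterate_succ_apply', pow_succ', mul_assoc]
    refine (h _ _).trans (mul_le_mul_of_nonneg_left (max_le ih (max_le ?_ ?_)) hk0.le)
    · refine (phiDist_step_iterate hφ0 hk0 hk1 h x n).trans ?_
      gcongr
      exact (le_max_left _ _).trans (le_max_right _ _)
    · refine (phiDist_step_iterate hφ0 hk0 hk1 h y n).trans ?_
      gcongr
      exact (le_max_right _ _).trans (le_max_right _ _)

theorem eq_of_phiDist_nonpos (hφ0 : ∀ x, 0 ≤ φ x) {x y : X} (h : B.phiDist φ x y ≤ 0) :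
    x = y := by
  have h1 := B.nonneg x y
  have h2 := hφ0 x
  have h3 := hφ0 y
  unfold phiDist at h
  exact (B.eq_iff x y).1 (by linarith)

theorem orbit_injective (hφ0 : ∀ x, 0 ≤ φ x) (hk0 : 0 < k) (hk1 : k < 1)
    (h : B.PhiContr T φ k) (hfix : ∀ z, T z ≠ z) (x : X) :
    Function.Injective (fun n => T^[n] x) := by
  refine Function.Injective.of_lt_imp_ne fun m n hmn heq => hfix (T^[m] x) ?_
  obtain ⟨p, rfl⟩ := Nat.exists_eq_add_of_lt hmn
  have h1 := phiDist_step_iterate hφ0 hk0 hk1 h (T^[m] x) (p + 1)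
  rw [← Function.iterate_add_apply, show p + 1 + m = m + p + 1 by ring, ← heq] at h1
  have h2 : k ^ (p + 1) < 1 := pow_lt_one₀ hk0.le hk1 (by simp)
  have h3 := B.phiDist_nonneg hφ0 (T^[m] x) (T (T^[m] x))
  exact (eq_of_phiDist_nonpos hφ0 (B := B) (by nlinarith)).symm

/-- Geometric decay along an orbit, in terms of `d` and the constant `2 * S x (T x)`. -/
theorem d_orbit_le (hφ0 : ∀ x, 0 ≤ φ x) (hk0 : 0 < k) (hk1 : k < 1)
    (h : B.PhiContr T φ k) (x : X) (n p : ℕ) :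
    B.d (T^[n] x) (T^[n + p] x) ≤
      k ^ n * (B.d x (T^[p] x) + 2 * B.phiDist φ x (T x)) := by
  have h1 := phiDist_iterate hφ0 hk0 hk1 h x (T^[p] x) n
  have h2 := phiDist_step_iterate hφ0 hk0 hk1 h x p
  have h3 := B.phiDist_nonneg hφ0 x (T x)
  have h4 : k ^ p ≤ 1 := pow_le_one₀ hk0.le hk1.le
  have h5 : B.phiDist φ (T^[p] x) (T (T^[p] x)) ≤ B.phiDist φ x (T x) := by nlinarith
  have h6 := B.nonneg x (T^[p] x)
  have hx : φ x ≤ B.phiDist φ x (T x) := by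
    have := B.nonneg x (T x)
    have := hφ0 (T x)
    unfold phiDist
    linarith
  have hp : φ (T^[p] x) ≤ B.phiDist φ (T^[p] x) (T (T^[p] x)) := by
    have := B.nonneg (T^[p] x) (T (T^[p] x))
    have := hφ0 (T (T^[p] x))
    unfold phiDist
    linarith
  have h7 : B.d (T^[n] x) (T^[n + p] x) ≤ B.phiDist φ (T^[n] x) (T^[n] (T^[p] x)) := by
    rw [Function.iterate_add_apply]
    have := hφ0 (T^[n] x)
    have := hφ0 (T^[n] (T^[p] x))
    unfold phiDist
    linarith
  refine h7.trans (h1.trans ?_)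
  gcongr
  refine max_le ?_ (max_le ?_ ?_)
  · have : B.phiDist φ x (T^[p] x) = B.d x (T^[p] x) + φ x + φ (T^[p] x) := rfl
    linarith
  · linarith
  · linarith

theorem orbit_bounded (hs : 1 ≤ s) (hφ0 : ∀ x, 0 ≤ φ x) (hk0 : 0 < k) (hk1 : k < 1)
    (h : B.PhiContr T φ k) (x : X) (hinj : Function.Injective (fun n => T^[n] x)) :
    ∃ C, ∀ p, B.d x (T^[p] x) ≤ C := by
  have ha := B.phiDist_nonneg hφ0 x (T x)
  set a := B.phiDist φ x (T x) with ha_def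
  obtain ⟨M, hM⟩ := exists_pow_lt_of_lt_one (show 0 < 1 / (2 * s) by positivity) hk1
  -- the index has to be positive for the four points of the rectangle to be distinct
  obtain ⟨N, hN0, hN⟩ : ∃ N, N ≠ 0 ∧ s * k ^ N ≤ 1 / 2 := by
    refine ⟨M + 1, by simp, ?_⟩
    have h1 : k ^ (M + 1) ≤ k ^ M := pow_le_pow_of_le_one hk0.le hk1.le (by simp)
    have h2 : k ^ (M + 1) ≤ 1 / (2 * s) := h1.trans hM.le
    calc s * k ^ (M + 1) ≤ s * (1 / (2 * s)) := by gcongr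
      _ = 1 / 2 := by field_simp
  have hLN := B.nonneg x (T^[N] x)
  refine ⟨2 * (s * B.d x (T^[N] x) + a + s * (B.d x (T^[N] x) + 2 * a)), fun p => ?_⟩
  have hsL : B.d x (T^[N] x) ≤ s * B.d x (T^[N] x) := le_mul_of_one_le_left hLN hs
  have hsa : 0 ≤ s * (B.d x (T^[N] x) + 2 * a) := by positivity
  by_cases hp0 : p = 0
  · subst hp0
    simp only [Function.iterate_zero, id, d_self]
    linarith
  by_cases hpN : p = N
  · subst hpN
    linarith
  have hne : ∀ i j, i ≠ j → T^[i] x ≠ T^[j] x := fun i j hij e => hij (hinj e)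
  have hr := B.rect x (T^[p] x) (T^[N] x) (T^[N + p] x) (hne _ _ (by omega))
    (hne N 0 hN0) (hne _ _ (Ne.symm hpN)) (hne (N + p) 0 (by omega)) (hne _ _ (by omega))
  have h1 := d_orbit_le hφ0 hk0 hk1 h x N p
  have h2 := d_orbit_le hφ0 hk0 hk1 h x p N
  rw [B.symm, add_comm p N] at h2
  rw [← ha_def] at h1 h2
  have hkp : k ^ p ≤ 1 := pow_le_one₀ hk0.le hk1.le
  have h3 : B.d (T^[N + p] x) (T^[p] x) ≤ B.d x (T^[N] x) + 2 * a :=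
    h2.trans (mul_le_of_le_one_left (by positivity) hkp)
  have h4 : s * B.d (T^[N] x) (T^[N + p] x) ≤ 1 / 2 * (B.d x (T^[p] x) + 2 * a) := by
    have hLp := B.nonneg x (T^[p] x)
    calc s * B.d (T^[N] x) (T^[N + p] x)
        ≤ s * (k ^ N * (B.d x (T^[p] x) + 2 * a)) := by gcongr
      _ = s * k ^ N * (B.d x (T^[p] x) + 2 * a) := by ring
      _ ≤ _ := by gcongr
  have h5 := mul_le_mul_of_nonneg_left h3 (zero_le_one.trans hs)
  linarith

theorem orbit_cauchy (hs : 1 ≤ s) (hφ0 : ∀ x, 0 ≤ φ x) (hk0 : 0 < k) (hk1 : k < 1)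
    (h : B.PhiContr T φ k) (x : X) (hinj : Function.Injective (fun n => T^[n] x)) :
    B.IsCauchySeq (fun n => T^[n] x) := by
  obtain ⟨C, hC⟩ := orbit_bounded hs hφ0 hk0 hk1 h x hinj
  have ha := B.phiDist_nonneg hφ0 x (T x)
  have hC0 : 0 ≤ C := (B.nonneg _ _).trans (hC 0)
  set K := C + 2 * B.phiDist φ x (T x) with hK
  have hK0 : 0 ≤ K := by positivity
  intro ε hε
  have ht : Tendsto (fun n : ℕ => k ^ n * K) atTop (𝓝 0) := by
    simpa using (tendsto_pow_atTop_nhds_zero_of_lt_one hk0.le hk1).mul_const K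
  obtain ⟨N, hN⟩ := (ht.eventually (gt_mem_nhds hε)).exists
  have key : ∀ m ≥ N, ∀ p, B.d (T^[m] x) (T^[m + p] x) < ε := by
    intro m hm p
    refine lt_of_le_of_lt ?_ hN
    refine (d_orbit_le hφ0 hk0 hk1 h x m p).trans ?_
    have h1 : k ^ m ≤ k ^ N := pow_le_pow_of_le_one hk0.le hk1.le hm
    have h2 := hC p
    have h3 := B.nonneg x (T^[p] x)
    rw [hK]
    gcongr
  refine ⟨N, fun m hm n hn => ?_⟩
  rcases le_total m n with hmn | hmn
  · obtain ⟨p, rfl⟩ := Nat.exists_eq_add_of_le hmn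
    exact key m hm p
  · obtain ⟨p, rfl⟩ := Nat.exists_eq_add_of_le hmn
    rw [B.symm]
    exact key n hn p

theorem phi_fixed (hφ0 : ∀ x, 0 ≤ φ x) (hk1 : k < 1) (h : B.PhiContr T φ k) {z : X}
    (hz : T z = z) : φ z = 0 := by
  have h1 := h z z
  simp only [hz, max_self, phiDist, d_self] at h1
  have := hφ0 z
  nlinarith

theorem fixed_unique (hφ0 : ∀ x, 0 ≤ φ x) (hk1 : k < 1) (h : B.PhiContr T φ k) {z w : X}
    (hz : T z = z) (hw : T w = w) : z = w := by
  have h1 := h z w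
  have hd := B.nonneg z w
  simp only [hz, hw, phiDist, d_self, phi_fixed hφ0 hk1 h hz, phi_fixed hφ0 hk1 h hw, add_zero,
    max_self, max_eq_left hd] at h1
  exact (B.eq_iff z w).1 (by nlinarith)

theorem eventually_ne {x : ℕ → X} (hinj : Function.Injective x) (w : X) :
    ∀ᶠ n in atTop, x n ≠ w := by
  have := hinj.tendsto_cofinite.eventually (Set.finite_singleton w).eventually_cofinite_notMem
  rw [Nat.cofinite_eq_atTop] at this
  exact this

theorem limit_fixed (hs : 1 ≤ s) (hφ0 : ∀ x, 0 ≤ φ x) (hφ : B.LSC φ) (hk0 : 0 < k) (hk1 : k < 1)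
    (hcontr : ∀ x y : X,
      s ^ 2 * B.d (T x) (T y) + φ (T x) + φ (T y) ≤ k * B.Mfun T φ x y)
    (h : B.PhiContr T φ k) (x z : X) (hinj : Function.Injective (fun n => T^[n] x))
    (hz : B.TendstoSeq (fun n => T^[n] x) z) : T z = z := by
  have hd : Tendsto (fun n => B.d (T^[n] x) z) atTop (𝓝 0) := hz
  have ha : Tendsto (fun n => B.phiDist φ (T^[n] x) (T (T^[n] x))) atTop (𝓝 0) := by
    refine squeeze_zero (fun n => B.phiDist_nonneg hφ0 _ _)
      (phiDist_step_iterate hφ0 hk0 hk1 h x) ?_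
    simpa using (tendsto_pow_atTop_nhds_zero_of_lt_one hk0.le hk1).mul_const _
  have hφx : ∀ y, φ y ≤ B.phiDist φ y (T y) := fun y => by
    have := B.nonneg y (T y)
    have := hφ0 (T y)
    unfold phiDist
    linarith
  have hφt : Tendsto (fun n => φ (T^[n] x)) atTop (𝓝 0) :=
    squeeze_zero (fun n => hφ0 _) (fun n => hφx _) ha
  have hφz : φ z = 0 := le_antisymm (by simpa [hφt.liminf_eq] using hφ _ z hz) (hφ0 z)
  have hlim : Tendsto (fun n => s ^ 2 * (B.d (T^[n] x) z + B.phiDist φ (T^[n] x) (T (T^[n] x)))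
      + k * (B.d (T^[n] x) z + φ (T^[n] x) + B.phiDist φ (T^[n] x) (T (T^[n] x))))
      atTop (𝓝 0) := by
    simpa using ((hd.add ha).const_mul (s ^ 2)).add (((hd.add hφt).add ha).const_mul k)
  have hle : (1 - k) * B.phiDist φ z (T z) ≤ 0 := by
    refine ge_of_tendsto hlim ?_
    have hS := B.phiDist_nonneg hφ0 z (T z)
    filter_upwards [eventually_ne hinj z, eventually_ne hinj (T z),
      (tendsto_add_atTop_nat 1).eventually (eventually_ne hinj z),
      (tendsto_add_atTop_nat 1).eventually (eventually_ne hinj (T z))] with n h1 h2 h3 h4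
    have h5 : T^[n] x ≠ T^[n + 1] x := fun e => by simpa using hinj e
    have hr := B.rect z (T z) (T^[n] x) (T^[n + 1] x) h5 h1 h2 h3 h4
    have hc := hcontr (T^[n] x) z
    rw [Function.iterate_succ_apply', B.symm z (T^[n] x)] at hr
    have hdn := B.nonneg (T^[n] x) z
    have hdn1 := B.nonneg (T^[n] x) (T (T^[n] x))
    have hφn := hφ0 (T^[n] x)
    have hφn1 := hφ0 (T (T^[n] x))
    have hM : B.Mfun T φ (T^[n] x) z ≤ B.d (T^[n] x) z + φ (T^[n] x) +
        B.phiDist φ (T^[n] x) (T (T^[n] x)) + B.phiDist φ z (T z) := by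
      have ha0 := B.phiDist_nonneg hφ0 (T^[n] x) (T (T^[n] x))
      refine max_le ?_ (max_le ?_ ?_)
      · linarith
      · change B.phiDist φ (T^[n] x) (T (T^[n] x)) ≤ _
        linarith
      · change B.phiDist φ z (T z) ≤ _
        linarith
    have hkM := mul_le_mul_of_nonneg_left hM hk0.le
    have hsr := mul_le_mul_of_nonneg_left hr (zero_le_one.trans hs)
    have hsd : B.d z (T z) ≤ s * B.d z (T z) := le_mul_of_one_le_left (B.nonneg _ _) hs
    have hda : s ^ 2 * B.d (T^[n] x) (T (T^[n] x)) ≤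
        s ^ 2 * B.phiDist φ (T^[n] x) (T (T^[n] x)) := by
      gcongr
      unfold phiDist
      linarith
    have hSz : B.phiDist φ z (T z) = B.d z (T z) + φ (T z) := by simp [phiDist, hφz]
    linarith
  exact (eq_of_phiDist_nonpos hφ0 (B := B) (by nlinarith)).symm

end Orbit

end RectBMetric

theorem stmt9 {X : Type*} [Nonempty X] {s : ℝ} (hs : 1 ≤ s) (B : RectBMetric X s)
    (hcomp : B.Complete) (T : X → X) (φ : X → ℝ) (hφ0 : ∀ x, 0 ≤ φ x)
    (hφ : B.LSC φ) (k : ℝ) (hk0 : 0 < k) (hk1 : k < 1)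
    (hcontr : ∀ x y : X,
      s ^ 2 * B.d (T x) (T y) + φ (T x) + φ (T y) ≤ k * B.Mfun T φ x y) :
    ∃! z : X, T z = z := by
  have h : B.PhiContr T φ k := fun x y => by
    refine le_trans ?_ (hcontr x y)
    have h1 : B.d (T x) (T y) ≤ s ^ 2 * B.d (T x) (T y) :=
      le_mul_of_one_le_left (B.nonneg _ _) (one_le_pow₀ hs)
    unfold RectBMetric.phiDist
    linarith
  have hex : ∃ z, T z = z := by
    by_contra! hfix
    obtain ⟨x⟩ := ‹Nonempty X›
    have hinj := RectBMetric.orbit_injective hφ0 hk0 hk1 h hfix x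
    obtain ⟨z, hz⟩ := hcomp _ (RectBMetric.orbit_cauchy hs hφ0 hk0 hk1 h x hinj)
    exact hfix z (RectBMetric.limit_fixed hs hφ0 hφ hk0 hk1 hcontr h x z hinj hz)
  obtain ⟨z, hz⟩ := hex
  exact ⟨z, hz, fun w hw => RectBMetric.fixed_unique hφ0 hk1 h hw hz⟩
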